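/- Let (X,d) be a metric space in which every Bourbaki bounded subset is totally bounded. If U(X) is a ring, then there exists a totally bounded set L ⊆ X such that for each ε > 0 the set X \ B(L,ε) is uniformly isolated. -/

import Mathlib

/-- `U(X)` is a ring: the pointwise product of any two uniformly continuous
real-valued functions on `X` is uniformly continuous. -/
def IsRingUC (X : Type*) [MetricSpace X] : Prop :=
  ∀ f g : X → ℝ, UniformContinuous f → UniformContinuous g →
    UniformContinuous (fun x => f x * g x)

/-- `A` is Bourbaki bounded in `X`: every uniformly continuous real-valued
function on `X` is bounded on `A`. -/
def BourbakiBounded {X : Type*} [MetricSpace X] (A : Set X) : Prop :=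
  ∀ f : X → ℝ, UniformContinuous f → ∃ M : ℝ, ∀ x ∈ A, |f x| ≤ M

/-- `A` is uniformly isolated: there is `ε > 0` such that `B(x,ε) = {x}` for all `x ∈ A`. -/
def UnifIsolated {X : Type*} [MetricSpace X] (A : Set X) : Prop :=
  ∃ ε > (0 : ℝ), ∀ x ∈ A, Metric.ball x ε = {x}

/-- The open `ε`-enlargement `B(F,ε)` of a set `F`. -/
def enl {X : Type*} [MetricSpace X] (F : Set X) (ε : ℝ) : Set X :=
  ⋃ x ∈ F, Metric.ball x ε

/-!
Let `S n` be the set of points whose `1 / (n + 1)`-ball is not a singleton. If there were a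
uniformly separated sequence `x n ∈ S n`, some uniformly continuous `f` would be unbounded on it.
After passing to a subsequence, narrow bumps of height `1 / f (x n)` at `x n` add up to a uniformly
continuous `g`, and `f * g` drops from `1` at `x n` to `0` at a point arbitrarily close to it.
Since no such sequence exists, for every `k` and `ε > 0` some `S n` is covered by finitely many
`ε`-balls with centres in `S k`; the centres obtained for `ε = 1 / (k + 1)`, over all `k`, form `L`.
-/

open Filter Metric Set Topology

theorem uniformContinuous_tsum {ι X E : Type*} [UniformSpace X] [NormedAddCommGroup E]
    [CompleteSpace E] {f : ι → X → E} {u : ι → ℝ} (hf : ∀ i, UniformContinuous (f i))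
    (hu : Summable u) (hfu : ∀ i z, ‖f i z‖ ≤ u i) :
    UniformContinuous fun z => ∑' i, f i z := by
  have partial_sums (s : Finset ι) : UniformContinuous fun z => ∑ i ∈ s, f i z := by
    simpa only [Finset.sum_fn] using
      Finset.sum_induction f UniformContinuous (fun _ _ hg hh => hg.add hh)
        uniformContinuous_const fun i _ => hf i
  exact (tendstoUniformly_tsum hu hfu).uniformContinuous (Frequently.of_forall partial_sums)

theorem frequently_le_of_not_bddAbove_range {α : Type*} [LinearOrder α] {u : ℕ → α}
    (hu : ¬ BddAbove (range u)) (M : α) : ∃ᶠ n in atTop, M ≤ u n := by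
  by_contra hM
  have eventually_le : ∀ᶠ n in atTop, u n ≤ M :=
    (not_frequently.1 hM).mono fun _ => le_of_not_ge
  exact hu (isBoundedUnder_of_eventually_le eventually_le).bddAbove_range

section PseudoMetricSpace

variable {X : Type*} [PseudoMetricSpace X] {ε : ℝ}

theorem not_totallyBounded_range_of_pairwise_le_dist {ι : Type*} [Infinite ι] {x : ι → X}
    (hε : 0 < ε) (hx : Pairwise fun i j => ε ≤ dist (x i) (x j)) :
    ¬ TotallyBounded (range x) := by
  intro htb
  obtain ⟨t, ht, hcover⟩ := totallyBounded_iff.1 htb (ε / 2) (half_pos hε)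
  have exists_center (i : ι) : ∃ z : t, dist (x i) z < ε / 2 := by
    simpa using hcover (mem_range_self i)
  choose center hcenter using exists_center
  have := ht.to_subtype
  obtain ⟨i, j, hij, heq⟩ := Finite.exists_ne_map_eq_of_infinite center
  refine (hx hij).not_gt ?_
  calc dist (x i) (x j) ≤ dist (x i) (center i) + dist (x j) (center i) := dist_triangle_right ..
    _ < ε / 2 + ε / 2 := add_lt_add (hcenter i) (heq ▸ hcenter j)
    _ = ε := add_halves ε

theorem exists_uniformContinuous_eq_and_eq_zero {ι : Type*} {x y : ι → X} {c : ι → ℝ}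
    (hc : Summable c) (hx : Pairwise fun i j => ε ≤ dist (x i) (x j))
    (hpos : ∀ i, 0 < dist (y i) (x i)) (hle : ∀ i, dist (y i) (x i) ≤ ε / 2) :
    ∃ g : X → ℝ, UniformContinuous g ∧ ∀ i, g (x i) = c i ∧ g (y i) = 0 := by
  let bump (i : ι) (z : X) : ℝ := c i * thickenedIndicator (hpos i) {x i} z
  have bump_center (i : ι) : bump i (x i) = c i := by
    simp only [bump, thickenedIndicator_one (hpos i) {x i} (mem_singleton _), NNReal.coe_one,
      mul_one]
  have bump_eq_zero {i : ι} {z : X} (hz : dist (y i) (x i) ≤ dist z (x i)) : bump i z = 0 := by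
    have hz_far : z ∉ thickening (dist (y i) (x i)) {x i} := by
      simpa [thickening_singleton] using hz
    simp only [bump, thickenedIndicator_zero (hpos i) {x i} hz_far, NNReal.coe_zero, mul_zero]
  have bump_uniformContinuous (i : ι) : UniformContinuous (bump i) :=
    (NNReal.isometry_coe.uniformContinuous.comp
      (lipschitzWith_thickenedIndicator (hpos i) {x i}).uniformContinuous).const_mul' (c i)
  have norm_bump_le (i : ι) (z : X) : ‖bump i z‖ ≤ |c i| := by
    have : (thickenedIndicator (hpos i) {x i} z : ℝ) ≤ 1 :=
      mod_cast thickenedIndicator_le_one (hpos i) {x i} z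
    simpa [bump, abs_mul] using mul_le_of_le_one_right (abs_nonneg (c i)) this
  have bump_of_ne {i j : ι} (hji : j ≠ i) : bump j (x i) = 0 ∧ bump j (y i) = 0 := by
    have sep : ε ≤ dist (x i) (x j) := hx hji.symm
    have tri : dist (x i) (x j) ≤ dist (y i) (x i) + dist (y i) (x j) := dist_triangle_left ..
    constructor <;> apply bump_eq_zero <;> linarith [hle i, hle j, hpos i]
  refine ⟨fun z => ∑' i, bump i z,
    uniformContinuous_tsum bump_uniformContinuous hc.abs norm_bump_le, fun i => ⟨?_, ?_⟩⟩
  · exact (tsum_eq_single i fun j hji => (bump_of_ne hji).1).trans (bump_center i)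
  · exact (tsum_eq_single i fun j hji => (bump_of_ne hji).2).trans (bump_eq_zero le_rfl)

theorem exists_pairwise_le_dist_of_forall_not_subset_thickening {S : ℕ → Set X} (hS : Antitone S)
    (hcover : ∀ F ⊆ S 0, F.Finite → ∀ n, ¬ S n ⊆ thickening ε F) :
    ∃ x : ℕ → X, (∀ n, x n ∈ S n) ∧ Pairwise fun m n => ε ≤ dist (x m) (x n) := by
  have exists_next (s : Finset (ℕ × X)) (hs : ∀ p ∈ s, p.2 ∈ S p.1) :
      ∃ q : ℕ × X, q.2 ∈ S q.1 ∧ ∀ p ∈ s, p.1 < q.1 ∧ ε ≤ dist p.2 q.2 := by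
    have centers_subset : image Prod.snd (s : Set (ℕ × X)) ⊆ S 0 := by
      rintro _ ⟨p, hp, rfl⟩
      exact hS (Nat.zero_le _) (hs p hp)
    obtain ⟨z, hz, hfar⟩ := not_subset.1 <|
      hcover _ centers_subset (s.finite_toSet.image _) (s.sup Prod.fst + 1)
    refine ⟨(_, z), hz, fun p hp => ⟨Nat.lt_succ_of_le (Finset.le_sup (f := Prod.fst) hp), ?_⟩⟩
    by_contra! hlt
    exact hfar (mem_thickening_iff.2 ⟨p.2, mem_image_of_mem _ hp, dist_comm p.2 z ▸ hlt⟩)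
  obtain ⟨u, hu, hstep⟩ := exists_seq_of_forall_finset_exists _ _ exists_next
  have index_strictMono : StrictMono fun n => (u n).1 := fun m n hmn => (hstep m n hmn).1
  refine ⟨fun n => (u n).2, fun n => hS (index_strictMono.id_le n) (hu n), fun m n hmn => ?_⟩
  rcases hmn.lt_or_gt with hlt | hgt
  · exact (hstep m n hlt).2
  · exact (hstep n m hgt).2.trans_eq (dist_comm ..)

theorem exists_totallyBounded_forall_exists_subset_thickening {S : ℕ → Set X} (hS : Antitone S)
    (hsep : ∀ ε > 0, ∀ x : ℕ → X, (∀ n, x n ∈ S n) → ¬ Pairwise fun m n => ε ≤ dist (x m) (x n)) :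
    ∃ L : Set X, TotallyBounded L ∧ ∀ ε > 0, ∃ n, S n ⊆ thickening ε L := by
  have exists_cover (k : ℕ) :
      ∃ F ⊆ S k, F.Finite ∧ ∃ n, S n ⊆ thickening (1 / ((k : ℝ) + 1)) F := by
    by_contra! hcover
    have antitone_shift : Antitone fun n => S (k + n) := fun m n hmn => hS (by gcongr)
    obtain ⟨x, hxS, hx⟩ := exists_pairwise_le_dist_of_forall_not_subset_thickening
      antitone_shift fun F hF hfin n => hcover F hF hfin (k + n)
    exact hsep _ Nat.one_div_pos_of_nat x (fun n => hS (Nat.le_add_left n k) (hxS n)) hx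
  choose F hFS hF N hN using exists_cover
  have exists_subset_thickening {ε : ℝ} (hε : 0 < ε) : ∃ k n, S n ⊆ thickening ε (F k) :=
    let ⟨k, hk⟩ := exists_nat_one_div_lt hε
    ⟨k, N k, (hN k).trans (thickening_mono hk.le _)⟩
  refine ⟨⋃ k, F k, totallyBounded_iff.2 fun ε hε => ?_, fun ε hε => ?_⟩
  · obtain ⟨k, n, hn⟩ := exists_subset_thickening hε
    refine ⟨(⋃ j ∈ Iio n, F j) ∪ F k, ((finite_Iio n).biUnion fun j _ => hF j).union (hF k), ?_⟩
    rw [← thickening_eq_biUnion_ball, thickening_union]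
    refine iUnion_subset fun j => ?_
    rcases lt_or_ge j n with hj | hj
    · exact subset_union_of_subset_left
        ((subset_biUnion_of_mem (mem_Iio.2 hj)).trans (self_subset_thickening hε _)) _
    · exact subset_union_of_subset_right (((hFS j).trans (hS hj)).trans hn) _
  · obtain ⟨k, n, hn⟩ := exists_subset_thickening hε
    exact ⟨n, hn.trans (thickening_subset_of_subset _ (subset_iUnion F k))⟩

end PseudoMetricSpace

section MetricSpace

variable {X : Type*} [MetricSpace X] {ε : ℝ}

theorem enl_eq_thickening (F : Set X) (ε : ℝ) : enl F ε = thickening ε F :=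
  thickening_eq_biUnion_ball.symm

theorem IsRingUC.bourbakiBounded_range (hring : IsRingUC X) {x y : ℕ → X} (hε : 0 < ε)
    (hx : Pairwise fun m n => ε ≤ dist (x m) (x n)) (hne : ∀ n, y n ≠ x n)
    (hlim : Tendsto (fun n => dist (y n) (x n)) atTop (𝓝 0)) :
    BourbakiBounded (range x) := by
  intro f hf
  suffices BddAbove (range fun n => |f (x n)|) by
    simpa [BddAbove, Set.Nonempty, mem_upperBounds] using this
  by_contra hunbounded
  obtain ⟨φ, hφ, hφN⟩ := extraction_forall_of_frequently fun n : ℕ =>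
    (frequently_le_of_not_bddAbove_range hunbounded (2 ^ n)).and_eventually
      (hlim.eventually_le_const (half_pos hε))
  have ne_zero (n : ℕ) : f (x (φ n)) ≠ 0 :=
    abs_pos.1 ((pow_pos two_pos n).trans_le (hφN n).1)
  have summable_inv : Summable fun n => (f (x (φ n)))⁻¹ := by
    refine summable_geometric_two.of_norm_bounded fun n => ?_
    rw [norm_inv, Real.norm_eq_abs, one_div, inv_pow]
    exact inv_anti₀ (pow_pos two_pos n) (hφN n).1
  obtain ⟨g, hg, hgxy⟩ := exists_uniformContinuous_eq_and_eq_zero summable_inv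
    (hx.comp_of_injective hφ.injective) (fun n => dist_pos.2 (hne (φ n))) fun n => (hφN n).2
  obtain ⟨δ, hδ, hfg⟩ := uniformContinuous_iff.1 (hring f g hf hg) 1 one_pos
  obtain ⟨n, hn⟩ := ((hlim.comp hφ.tendsto_atTop).eventually_lt_const hδ).exists
  simpa [(hgxy n).1, (hgxy n).2, ne_zero n] using hfg hn

/-- The points that are not isolated at scale `δ`: those whose open `δ`-ball contains a second
point. For `δ > 0`, uniform isolation at scale `δ` means disjointness from this set. -/
def nonIsolatedAt (X : Type*) [MetricSpace X] (δ : ℝ) : Set X :=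
  {x | (ball x δ).Nontrivial}

theorem monotone_nonIsolatedAt : Monotone (nonIsolatedAt X) :=
  fun _ _ hδ _ hx => hx.mono (ball_subset_ball hδ)

theorem unifIsolated_of_disjoint_nonIsolatedAt {A : Set X} (hε : 0 < ε)
    (hA : Disjoint A (nonIsolatedAt X ε)) : UnifIsolated A :=
  ⟨ε, hε, fun _ hx => (not_nontrivial_iff.1 (disjoint_left.1 hA hx)).eq_singleton_of_mem
    (mem_ball_self hε)⟩

theorem IsRingUC.not_pairwise_le_dist_of_mem_nonIsolatedAt (hring : IsRingUC X)
    (htb : ∀ A : Set X, BourbakiBounded A → TotallyBounded A) {r : ℕ → ℝ}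
    (hr : Tendsto r atTop (𝓝 0)) (hε : 0 < ε) {x : ℕ → X} (hx : ∀ n, x n ∈ nonIsolatedAt X (r n)) :
    ¬ Pairwise fun m n => ε ≤ dist (x m) (x n) := by
  intro hsep
  choose y hy hne using fun n => (hx n).exists_ne (x n)
  have dist_tendsto_zero : Tendsto (fun n => dist (y n) (x n)) atTop (𝓝 0) :=
    squeeze_zero (fun _ => dist_nonneg) (fun n => (mem_ball.1 (hy n)).le) hr
  exact not_totallyBounded_range_of_pairwise_le_dist hε hsep
    (htb _ (hring.bourbakiBounded_range hε hsep hne dist_tendsto_zero))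

end MetricSpace

theorem stmt13 {X : Type*} [MetricSpace X]
    (htb : ∀ A : Set X, BourbakiBounded A → TotallyBounded A)
    (hring : IsRingUC X) :
    ∃ L : Set X, TotallyBounded L ∧
      ∀ ε > (0 : ℝ), UnifIsolated (Set.univ \ enl L ε) := by
  let S (n : ℕ) : Set X := nonIsolatedAt X (1 / ((n : ℝ) + 1))
  have antitone_S : Antitone S := fun _ _ hmn =>
    monotone_nonIsolatedAt (Nat.one_div_le_one_div hmn)
  obtain ⟨L, hL, hS⟩ := exists_totallyBounded_forall_exists_subset_thickening antitone_S
    fun _ hε _ hx => hring.not_pairwise_le_dist_of_mem_nonIsolatedAt htb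
      tendsto_one_div_add_atTop_nhds_zero_nat hε hx
  refine ⟨L, hL, fun ε hε => ?_⟩
  obtain ⟨n, hn⟩ := hS ε hε
  rw [enl_eq_thickening]
  exact unifIsolated_of_disjoint_nonIsolatedAt Nat.one_div_pos_of_nat
    (disjoint_sdiff_left.mono_right hn)
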